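/- For a subset C of the 24 candidate pairs, let Γ_C be the simple graph on the 18 vertices {T'_1,…,T'_4,T_5,…,T_8,S_1,…,S_6,S_2',…,S_5'} whose edge set is the union of the base edges and the pairs {T,S} with (T;S) ∈ C. Call C admissible if every vertex of Γ_C has even degree. The group G' acts on admissible subsets componentwise (applying σ ∈ G' to both points of each candidate pair). Then the number of G'-orbits of admissible subsets is exactly 30; one orbit is that of the full set of all 24 candidate pairs (corresponding to the monohedral tiling FB𝒪), and the remaining 29 correspond to the dihedral f-tilings whose prototiles are the Möbius triangle and the kite derived from FB𝒪. -/

import Mathlib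

open Matrix

attribute [local instance] Classical.propDecidable

/-- `τ = (2√2+1)/7`. -/
noncomputable def tau : ℝ := (2 * Real.sqrt 2 + 1) / 7

/-- The 18 vertices: `pt 0,…,pt 3` are `T'_1,…,T'_4`; `pt 4,…,pt 7` are `T_5,…,T_8`;
`pt 8,…,pt 13` are `S_1,…,S_6`; `pt 14,…,pt 17` are `S_2',…,S_5'`. -/
noncomputable def pt : Fin 18 → Fin 3 → ℝ :=
  ![tau • ![Real.sqrt 2, 0, 1], tau • ![0, Real.sqrt 2, 1],
    tau • ![-Real.sqrt 2, 0, 1], tau • ![0, -Real.sqrt 2, 1],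
    tau • ![1, 1, -1], tau • ![-1, 1, -1], tau • ![-1, -1, -1], tau • ![1, -1, -1],
    ![0, 0, 1], ![1, 0, 0], ![0, 1, 0], ![-1, 0, 0], ![0, -1, 0], ![0, 0, -1],
    (1 / Real.sqrt 2) • ![1, -1, 0], (1 / Real.sqrt 2) • ![1, 1, 0],
    (1 / Real.sqrt 2) • ![-1, 1, 0], (1 / Real.sqrt 2) • ![-1, -1, 0]]

/-- The base edges: top square, bottom square, the `S`-edges, and the eight fixed
ridge edges. -/
def baseEdges : Finset (Sym2 (Fin 18)) :=
  { s(0, 1), s(1, 2), s(2, 3), s(3, 0),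
    s(4, 5), s(5, 6), s(6, 7), s(7, 4),
    s(8, 14), s(8, 15), s(8, 16), s(8, 17),
    s(13, 9), s(13, 10), s(13, 11), s(13, 12),
    s(9, 14), s(9, 15), s(10, 15), s(10, 16),
    s(11, 16), s(11, 17), s(12, 17), s(12, 14),
    s(0, 9), s(1, 10), s(2, 11), s(3, 12),
    s(4, 15), s(5, 16), s(6, 17), s(7, 14) }

/-- The 24 candidate pairs `(T; S)`. -/
def candPairs : Finset (Fin 18 × Fin 18) :=
  { (0, 8), (0, 14), (0, 15), (1, 8), (1, 15), (1, 16),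
    (2, 8), (2, 16), (2, 17), (3, 8), (3, 17), (3, 14),
    (4, 9), (4, 10), (4, 13), (5, 10), (5, 11), (5, 13),
    (6, 11), (6, 12), (6, 13), (7, 12), (7, 9), (7, 13) }

/-- The simple graph `Γ_C` on the 18 vertices, whose edge set is the union of the
base edges and the pairs `{T, S}` with `(T; S) ∈ C`. -/
noncomputable def Γ (C : Finset (Fin 18 × Fin 18)) : SimpleGraph (Fin 18) :=
  SimpleGraph.fromEdgeSet ↑(baseEdges ∪ C.image fun p => s(p.1, p.2))

/-- A subset `C` of the 24 candidate pairs is admissible if every vertex of `Γ_C`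
has even degree. -/
noncomputable def IsAdmissible (C : Finset (Fin 18 × Fin 18)) : Prop :=
  C ⊆ candPairs ∧ ∀ v : Fin 18, Even ((Γ C).degree v)

/-- The matrix `σ'₂` with rows `(1/√2, 1/√2, 0), (−1/√2, 1/√2, 0), (0, 0, −1)`. -/
noncomputable def sigma2' : Matrix (Fin 3) (Fin 3) ℝ :=
  !![1 / Real.sqrt 2, 1 / Real.sqrt 2, 0;
     -(1 / Real.sqrt 2), 1 / Real.sqrt 2, 0;
     0, 0, -1]

/-- The matrix `σ' = diag(1, −1, 1)`. -/
def sigma' : Matrix (Fin 3) (Fin 3) ℝ := !![1, 0, 0; 0, -1, 0; 0, 0, 1]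

/-- `G'`: the subgroup of `GL(3,ℝ)` generated by `σ'₂` and `σ'`. -/
noncomputable def G' : Subgroup (GL (Fin 3) ℝ) :=
  Subgroup.closure {g | (↑g : Matrix (Fin 3) (Fin 3) ℝ) = sigma2' ∨
    (↑g : Matrix (Fin 3) (Fin 3) ℝ) = sigma'}

/-- `C'` is obtained from `C` by the componentwise action of some `σ ∈ G'`. -/
noncomputable def admRel (C C' : {C : Finset (Fin 18 × Fin 18) // IsAdmissible C}) :
    Prop :=
  ∃ u ∈ G', ∀ p : Fin 18 × Fin 18, p ∈ C'.1 ↔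
    ∃ q ∈ C.1, (↑u : Matrix (Fin 3) (Fin 3) ℝ).mulVec (pt q.1) = pt p.1 ∧
      (↑u : Matrix (Fin 3) (Fin 3) ℝ).mulVec (pt q.2) = pt p.2

/-!
An admissible set contains both or neither of the two candidate pairs at each of the eight points
`S` on the equator, by parity there, so it colours the equator with two colours. Conversely every
colouring arises exactly once: parity at the points `T` determines the pairs at the poles, and
parity at the poles is then automatic, because each colour occurs twice in the sum. The group `G'`
acts on the equator as the dihedral group of order `16` on a regular octagon, so its orbits on
admissible sets are the two-coloured bracelets with eight beads, which Burnside's lemma counts.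
-/

section Dihedral

open DihedralGroup

variable {n : ℕ}

/-- The dihedral group acting on the vertices of a regular `n`-gon, labelled by `ZMod n`. -/
instance dihedralAction : MulAction (DihedralGroup n) (ZMod n) where
  smul
    | r i, k => k + i
    | sr i, k => -(k + i)
  one_smul := add_zero
  mul_smul := by
    rintro (i | i) (j | j) k
    · change k + (i + j) = k + j + i
      ring
    · change -(k + (j - i)) = -(k + j) + i
      ring
    · change -(k + (i + j)) = -(k + j + i)
      ring
    · change k + (j - i) = -(-(k + j) + i)
      ring

lemma r_smul (i k : ZMod n) : r i • k = k + i := rfl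

lemma sr_smul (i k : ZMod n) : sr i • k = -(k + i) := rfl

lemma closure_r_one_sr_zero :
    Subgroup.closure {r 1, sr 0} = (⊤ : Subgroup (DihedralGroup n)) := by
  have r_one_mem : r 1 ∈ Subgroup.closure {r (1 : ZMod n), sr 0} :=
    Subgroup.subset_closure (Set.mem_insert _ _)
  have sr_zero_mem : sr 0 ∈ Subgroup.closure {r (1 : ZMod n), sr 0} :=
    Subgroup.subset_closure (Set.mem_insert_of_mem _ rfl)
  have r_mem (i : ZMod n) : r i ∈ Subgroup.closure {r 1, sr 0} := by
    obtain ⟨m, rfl⟩ := ZMod.intCast_surjective i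
    exact r_one_zpow (n := n) m ▸ zpow_mem r_one_mem m
  refine (Subgroup.eq_top_iff' _).2 ?_
  rintro (i | i)
  · exact r_mem i
  · simpa only [sr_mul_r, zero_add] using mul_mem sr_zero_mem (r_mem i)

lemma sum_dihedralGroup [NeZero n] {M : Type*} [AddCommMonoid M] (f : DihedralGroup n → M) :
    ∑ g, f g = ∑ i, f (r i) + ∑ i, f (sr i) := by
  rw [← equivSum.symm.sum_comp, Fintype.sum_sum_type]
  rfl

end Dihedral

section Bracelets

open DihedralGroup Finset MulAction

attribute [local instance] arrowAction

lemma card_fixedBy_r :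
    ∀ i : ZMod 8, #{c : ZMod 8 → ZMod 2 | r i • c = c} = 2 ^ Nat.gcd 8 i.val := by
  decide +kernel

lemma card_fixedBy_sr :
    ∀ i : ZMod 8, #{c : ZMod 8 → ZMod 2 | sr i • c = c} = if Even i.val then 2 ^ 5 else 2 ^ 4 := by
  decide +kernel

lemma card_bracelets :
    Nat.card (Quotient (orbitRel (DihedralGroup 8) (ZMod 8 → ZMod 2))) = 30 := by
  have burnside := sum_card_fixedBy_eq_card_orbits_mul_card_group
    (DihedralGroup 8) (ZMod 8 → ZMod 2)
  have fixed (g : DihedralGroup 8) : Fintype.card (fixedBy (ZMod 8 → ZMod 2) g) =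
      #{c : ZMod 8 → ZMod 2 | g • c = c} := Fintype.card_subtype _
  have total : ∑ g : DihedralGroup 8, #{c : ZMod 8 → ZMod 2 | g • c = c} = 30 * 16 := by
    simp only [sum_dihedralGroup, card_fixedBy_r, card_fixedBy_sr]
    decide +kernel
  simp only [fixed, total, DihedralGroup.card] at burnside
  rw [Nat.card_eq_fintype_card]
  omega

end Bracelets

section Degrees

open Finset

lemma degree_fromEdgeSet {V : Type*} [DecidableEq V] {E : Finset (Sym2 V)}
    (hE : ∀ e ∈ E, ¬e.IsDiag) (v : V)
    [Fintype ((SimpleGraph.fromEdgeSet (E : Set (Sym2 V))).neighborSet v)] :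
    (SimpleGraph.fromEdgeSet (E : Set (Sym2 V))).degree v = #{e ∈ E | v ∈ e} := by
  rw [← SimpleGraph.card_incidenceFinset_eq_degree]
  congr 1
  ext e
  simp only [SimpleGraph.mem_incidenceFinset, SimpleGraph.incidenceSet,
    SimpleGraph.edgeSet_fromEdgeSet, Set.mem_ofPred_eq, Set.mem_sdiff, mem_coe,
    Sym2.mem_diagSet, mem_filter]
  exact and_congr_left fun _ => and_iff_left_of_imp (hE e)

lemma not_isDiag_of_mem_baseEdges : ∀ e ∈ baseEdges, ¬e.IsDiag := by decide +kernel

lemma candPairs_fst_ne_snd : ∀ p ∈ candPairs, p.1 ≠ p.2 := by decide +kernel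

lemma candPair_notMem_baseEdges : ∀ p ∈ candPairs, s(p.1, p.2) ∉ baseEdges := by decide +kernel

lemma injOn_candPairs_sym2Mk :
    Set.InjOn (fun p : Fin 18 × Fin 18 => s(p.1, p.2)) candPairs := by
  have h : ∀ p ∈ candPairs, ∀ q ∈ candPairs, s(p.1, p.2) = s(q.1, q.2) → p = q := by
    decide +kernel
  exact fun p hp q hq => h p hp q hq

lemma degree_Γ {C : Finset (Fin 18 × Fin 18)} (hC : C ⊆ candPairs) (v : Fin 18) :
    (Γ C).degree v = #{e ∈ baseEdges | v ∈ e} + #{p ∈ C | v = p.1 ∨ v = p.2} := by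
  have loopless : ∀ e ∈ baseEdges ∪ C.image fun p => s(p.1, p.2), ¬e.IsDiag := by
    simp only [mem_union, mem_image]
    rintro _ (he | ⟨p, hp, rfl⟩)
    · exact not_isDiag_of_mem_baseEdges _ he
    · exact candPairs_fst_ne_snd p (hC hp)
  have disjoint : Disjoint baseEdges (C.image fun p => s(p.1, p.2)) := by
    simp only [disjoint_right, mem_image]
    rintro _ ⟨p, hp, rfl⟩
    exact candPair_notMem_baseEdges p (hC hp)
  rw [Γ, degree_fromEdgeSet loopless, filter_union,
    card_union_of_disjoint (disjoint_filter_filter disjoint), filter_image,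
    card_image_of_injOn]
  · simp only [Sym2.mem_iff]
  · exact injOn_candPairs_sym2Mk.mono fun p hp => hC (mem_filter.1 hp).1

end Degrees

section Coloring

open Finset

/-- The vertices `T` by angle: `tVertex k` lies at `-45° * k` in the horizontal plane, the sense
in which `σ'₂` turns. -/
def tVertex : ZMod 8 → Fin 18 := ![0, 7, 3, 6, 2, 5, 1, 4]

/-- The vertices `S` on the equator by angle: `sVertex k` lies at `-45° * k`. -/
def sVertex : ZMod 8 → Fin 18 := ![9, 14, 12, 17, 11, 16, 10, 15]

/-- The pole `S_1` or `S_6` on the same side of the equator as `tVertex k`. -/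
def pole : ZMod 8 → Fin 18 := ![8, 13, 8, 13, 8, 13, 8, 13]

lemma tVertex_injective : tVertex.Injective := by decide +kernel

lemma sVertex_injective : sVertex.Injective := by decide +kernel

lemma pole_ne_sVertex : ∀ j k, pole j ≠ sVertex k := by decide +kernel

lemma vertex_cases : ∀ v, ∃ k, v = tVertex k ∨ v = sVertex k ∨ v = pole k := by decide +kernel

lemma tVertex_sVertex_mem_candPairs_iff :
    ∀ k j, (tVertex k, sVertex j) ∈ candPairs ↔ j = k - 1 ∨ j = k + 1 := by
  decide +kernel

lemma tVertex_pole_mem_candPairs : ∀ k, (tVertex k, pole k) ∈ candPairs := by decide +kernel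

lemma candPairs_cases : ∀ p ∈ candPairs,
    (∃ k j, p = (tVertex k, sVertex j)) ∨ ∃ k, p = (tVertex k, pole k) := by
  decide +kernel

lemma filter_candPairs_tVertex : ∀ k, {p ∈ candPairs | tVertex k = p.1 ∨ tVertex k = p.2} =
    {(tVertex k, sVertex (k - 1)), (tVertex k, sVertex (k + 1)), (tVertex k, pole k)} := by
  decide +kernel

lemma filter_candPairs_sVertex : ∀ k, {p ∈ candPairs | sVertex k = p.1 ∨ sVertex k = p.2} =
    {(tVertex (k - 1), sVertex k), (tVertex (k + 1), sVertex k)} := by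
  decide +kernel

lemma filter_candPairs_pole : ∀ k, {p ∈ candPairs | pole k = p.1 ∨ pole k = p.2} =
    {(tVertex k, pole k), (tVertex (k + 2), pole (k + 2)), (tVertex (k + 4), pole (k + 4)),
      (tVertex (k + 6), pole (k + 6))} := by
  decide +kernel

lemma card_baseEdges_tVertex : ∀ k, #{e ∈ baseEdges | tVertex k ∈ e} = 3 := by decide +kernel

lemma card_baseEdges_sVertex : ∀ k, #{e ∈ baseEdges | sVertex k ∈ e} = 4 := by decide +kernel

lemma card_baseEdges_pole : ∀ k, #{e ∈ baseEdges | pole k ∈ e} = 4 := by decide +kernel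

/-- The indicator of `C` with values in `ZMod 2`, in which degrees are computed. -/
noncomputable def mark (C : Finset (Fin 18 × Fin 18)) (p : Fin 18 × Fin 18) : ZMod 2 :=
  if p ∈ C then 1 else 0

lemma eq_of_mark_eq {C D : Finset (Fin 18 × Fin 18)} (hC : C ⊆ candPairs) (hD : D ⊆ candPairs)
    (h : ∀ p ∈ candPairs, mark C p = mark D p) : C = D := by
  ext p
  by_cases hp : p ∈ candPairs
  · have := h p hp
    unfold mark at this
    split_ifs at this <;> simp_all
  · exact iff_of_false (fun h => hp (hC h)) fun h => hp (hD h)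

lemma even_degree_Γ_iff {C : Finset (Fin 18 × Fin 18)} (hC : C ⊆ candPairs) (v : Fin 18) :
    Even ((Γ C).degree v) ↔ (#{e ∈ baseEdges | v ∈ e} : ZMod 2) +
      ∑ p ∈ candPairs with v = p.1 ∨ v = p.2, mark C p = 0 := by
  have restrict : {p ∈ C | v = p.1 ∨ v = p.2} =
      {p ∈ {p ∈ candPairs | v = p.1 ∨ v = p.2} | p ∈ C} := by
    ext p
    simp only [mem_filter]
    exact ⟨fun ⟨hp, hv⟩ => ⟨⟨hC hp, hv⟩, hp⟩, fun ⟨⟨_, hv⟩, hp⟩ => ⟨hp, hv⟩⟩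
  rw [← ZMod.natCast_eq_zero_iff_even, degree_Γ hC, Nat.cast_add, restrict,
    natCast_card_filter (fun p => p ∈ C)]
  rfl

lemma even_degree_tVertex_iff {C : Finset (Fin 18 × Fin 18)} (hC : C ⊆ candPairs) (k : ZMod 8) :
    Even ((Γ C).degree (tVertex k)) ↔ mark C (tVertex k, pole k) =
      1 + mark C (tVertex k, sVertex (k - 1)) + mark C (tVertex k, sVertex (k + 1)) := by
  have hk : k - 1 ≠ k + 1 := by grind
  rw [even_degree_Γ_iff hC, filter_candPairs_tVertex, card_baseEdges_tVertex, sum_insert,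
    sum_pair]
  · grind
  all_goals simp [sVertex_injective.eq_iff, hk, (pole_ne_sVertex _ _).symm]

lemma even_degree_sVertex_iff {C : Finset (Fin 18 × Fin 18)} (hC : C ⊆ candPairs) (k : ZMod 8) :
    Even ((Γ C).degree (sVertex k)) ↔
      mark C (tVertex (k - 1), sVertex k) = mark C (tVertex (k + 1), sVertex k) := by
  have hk : k - 1 ≠ k + 1 := by grind
  rw [even_degree_Γ_iff hC, filter_candPairs_sVertex, card_baseEdges_sVertex, sum_pair]
  · grind
  · simp [tVertex_injective.eq_iff, hk]

lemma even_degree_pole_iff {C : Finset (Fin 18 × Fin 18)} (hC : C ⊆ candPairs) (k : ZMod 8) :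
    Even ((Γ C).degree (pole k)) ↔ mark C (tVertex k, pole k) +
      mark C (tVertex (k + 2), pole (k + 2)) + mark C (tVertex (k + 4), pole (k + 4)) +
      mark C (tVertex (k + 6), pole (k + 6)) = 0 := by
  rw [even_degree_Γ_iff hC, filter_candPairs_pole, card_baseEdges_pole, sum_insert, sum_insert,
    sum_pair]
  · grind
  all_goals
    simp only [mem_insert, mem_singleton, Prod.mk.injEq, tVertex_injective.eq_iff, ne_eq]
    grind

/-- The set of candidate pairs encoded by a colouring `c` of the equator: the pairs at `sVertex k`
are all taken or all left out according to `c k`, and the choice of the pairs at the poles is then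
forced by parity at the vertices `T`. -/
noncomputable def ofColoring (c : ZMod 8 → ZMod 2) : Finset (Fin 18 × Fin 18) :=
  {p ∈ candPairs | (∃ k, p.2 = sVertex k ∧ c k = 1) ∨
    ∃ k, p = (tVertex k, pole k) ∧ c (k - 1) = c (k + 1)}

lemma ofColoring_subset (c : ZMod 8 → ZMod 2) : ofColoring c ⊆ candPairs := filter_subset _ _

variable (c : ZMod 8 → ZMod 2)

lemma mark_ofColoring_sVertex {k j : ZMod 8} (h : j = k - 1 ∨ j = k + 1) :
    mark (ofColoring c) (tVertex k, sVertex j) = c j := by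
  have mem_iff : (tVertex k, sVertex j) ∈ ofColoring c ↔ c j = 1 := by
    simp [ofColoring, tVertex_sVertex_mem_candPairs_iff, h, sVertex_injective.eq_iff,
      (pole_ne_sVertex _ _).symm]
  simp only [mark, mem_iff]
  generalize c j = x
  decide +revert

lemma mark_ofColoring_pole (k : ZMod 8) :
    mark (ofColoring c) (tVertex k, pole k) = 1 + c (k - 1) + c (k + 1) := by
  have mem_iff : (tVertex k, pole k) ∈ ofColoring c ↔ c (k - 1) = c (k + 1) := by
    simp [ofColoring, tVertex_pole_mem_candPairs, tVertex_injective.eq_iff, pole_ne_sVertex]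
  simp only [mark, mem_iff]
  generalize c (k - 1) = x, c (k + 1) = y
  decide +revert

lemma isAdmissible_ofColoring : IsAdmissible (ofColoring c) := by
  have hC := ofColoring_subset c
  refine ⟨hC, fun v => ?_⟩
  obtain ⟨k, rfl | rfl | rfl⟩ := vertex_cases v
  · rw [even_degree_tVertex_iff hC, mark_ofColoring_pole, mark_ofColoring_sVertex c (.inl rfl),
      mark_ofColoring_sVertex c (.inr rfl)]
  · rw [even_degree_sVertex_iff hC, mark_ofColoring_sVertex c (.inr (by ring)),
      mark_ofColoring_sVertex c (.inl (by ring))]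
  · rw [even_degree_pole_iff hC]
    have h₂ : k + 2 - 1 = k + 1 := by ring
    have h₄ : k + 4 - 1 = k + 2 + 1 := by ring
    have h₆ : k + 6 - 1 = k + 4 + 1 := by ring
    have h₈ : k + 6 + 1 = k - 1 := by grind
    simp only [mark_ofColoring_pole, h₂, h₄, h₆, h₈]
    grind

lemma exists_ofColoring_eq {C : Finset (Fin 18 × Fin 18)} (h : IsAdmissible C) :
    ∃ c, ofColoring c = C := by
  obtain ⟨hC, even⟩ := h
  let c : ZMod 8 → ZMod 2 := fun k => mark C (tVertex (k + 1), sVertex k)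
  have mark_sVertex (k j : ZMod 8) (hj : j = k - 1 ∨ j = k + 1) :
      mark C (tVertex k, sVertex j) = c j := by
    rcases hj with rfl | rfl
    · simp only [c, sub_add_cancel]
    · simpa only [add_sub_cancel_right] using (even_degree_sVertex_iff hC (k + 1)).1 (even _)
  refine ⟨c, eq_of_mark_eq (ofColoring_subset c) hC fun p hp => ?_⟩
  obtain ⟨k, j, rfl⟩ | ⟨k, rfl⟩ := candPairs_cases p hp
  · have hj := (tVertex_sVertex_mem_candPairs_iff k j).1 hp
    rw [mark_ofColoring_sVertex c hj, mark_sVertex k j hj]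
  · rw [mark_ofColoring_pole, (even_degree_tVertex_iff hC k).1 (even _),
      mark_sVertex k _ (.inl rfl), mark_sVertex k _ (.inr rfl)]

lemma ofColoring_injective : ofColoring.Injective := by
  intro c d h
  ext k
  have hk : k = k + 1 - 1 ∨ k = k + 1 + 1 := .inl (by ring)
  rw [← mark_ofColoring_sVertex c hk, h, mark_ofColoring_sVertex d hk]

/-- Admissible sets of candidate pairs correspond to colourings of the equator. -/
noncomputable def coloringEquiv :
    (ZMod 8 → ZMod 2) ≃ {C : Finset (Fin 18 × Fin 18) // IsAdmissible C} :=
  .ofBijective (fun c => ⟨ofColoring c, isAdmissible_ofColoring c⟩)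
    ⟨fun _ _ h => ofColoring_injective (congrArg Subtype.val h),
      fun ⟨_, hC⟩ => (exists_ofColoring_eq hC).imp fun _ => Subtype.ext⟩

lemma ofColoring_one : ofColoring 1 = candPairs := by
  refine (filter_subset _ _).antisymm fun p hp => mem_filter.2 ⟨hp, ?_⟩
  obtain ⟨k, j, rfl⟩ | ⟨k, rfl⟩ := candPairs_cases p hp
  · exact .inl ⟨j, rfl, rfl⟩
  · exact .inr ⟨k, rfl, rfl⟩

end Coloring

section VertexAction

open DihedralGroup

/-- The permutation of the vertices induced by `σ'₂`. -/
def rotateVertex : Fin 18 → Fin 18 :=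
  ![7, 4, 5, 6, 0, 1, 2, 3, 13, 14, 15, 16, 17, 8, 12, 9, 10, 11]

/-- The permutation of the vertices induced by `σ'`. -/
def reflectVertex : Fin 18 → Fin 18 :=
  ![0, 3, 2, 1, 7, 6, 5, 4, 8, 9, 12, 11, 10, 13, 15, 14, 17, 16]

/-- The permutation of the vertices induced by an element of the dihedral group of order `16`,
in which `r 1` stands for `σ'₂` and `sr 0` for `σ'`. -/
def permuteVertex : DihedralGroup 8 → Fin 18 → Fin 18
  | r i, v => rotateVertex^[i.val] v
  | sr i, v => reflectVertex (rotateVertex^[i.val] v)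

/-- The action of the dihedral group on the vertices through `permuteVertex`. -/
abbrev vertexAction : MulAction (DihedralGroup 8) (Fin 18) where
  smul := permuteVertex
  one_smul _ := rfl
  mul_smul := by
    have h : ∀ g h v, permuteVertex (g * h) v = permuteVertex g (permuteVertex h v) := by
      decide +kernel
    exact h

attribute [local instance] vertexAction

lemma smul_tVertex : ∀ (g : DihedralGroup 8) k, g • tVertex k = tVertex (g • k) := by
  decide +kernel

lemma smul_sVertex : ∀ (g : DihedralGroup 8) k, g • sVertex k = sVertex (g • k) := by
  decide +kernel

lemma smul_pole : ∀ (g : DihedralGroup 8) k, g • pole k = pole (g • k) := by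
  decide +kernel

open scoped Pointwise

lemma smul_candPairs : ∀ g : DihedralGroup 8, g • candPairs = candPairs := by
  decide +kernel

lemma smul_mem_candPairs (g : DihedralGroup 8) {p : Fin 18 × Fin 18} (hp : p ∈ candPairs) :
    g • p ∈ candPairs := smul_candPairs g ▸ Finset.smul_mem_smul_finset hp

lemma mark_smul_smul (g : DihedralGroup 8) (C : Finset (Fin 18 × Fin 18)) (p : Fin 18 × Fin 18) :
    mark (g • C) (g • p) = mark C p := by
  simp only [mark, Finset.smul_mem_smul_finset_iff]

attribute [local instance] arrowAction in
lemma mark_ofColoring_smul (g : DihedralGroup 8) (c : ZMod 8 → ZMod 2) {p : Fin 18 × Fin 18}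
    (hp : p ∈ candPairs) : mark (ofColoring (g • c)) (g • p) = mark (ofColoring c) p := by
  have smul_apply (k : ZMod 8) : (g • c) (g • k) = c k := congrArg c (inv_smul_smul g k)
  obtain ⟨k, j, rfl⟩ | ⟨k, rfl⟩ := candPairs_cases p hp
  · have h := smul_mem_candPairs g hp
    rw [Prod.smul_mk, smul_tVertex, smul_sVertex] at h ⊢
    rw [mark_ofColoring_sVertex _ ((tVertex_sVertex_mem_candPairs_iff _ _).1 h),
      mark_ofColoring_sVertex _ ((tVertex_sVertex_mem_candPairs_iff _ _).1 hp), smul_apply]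
  · rw [Prod.smul_mk, smul_tVertex, smul_pole, mark_ofColoring_pole, mark_ofColoring_pole,
      ← smul_apply, ← smul_apply (k + 1)]
    rcases g with i | i
    · simp only [r_smul]
      ring_nf
    · simp only [sr_smul]
      ring_nf

attribute [local instance] arrowAction in
lemma smul_ofColoring (g : DihedralGroup 8) (c : ZMod 8 → ZMod 2) :
    g • ofColoring c = ofColoring (g • c) := by
  have subset : g • ofColoring c ⊆ candPairs :=
    smul_candPairs g ▸ Finset.smul_finset_subset_smul_finset (ofColoring_subset c)
  refine eq_of_mark_eq subset (ofColoring_subset _) fun p hp => ?_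
  obtain ⟨q, rfl⟩ : ∃ q, g • q = p := ⟨g⁻¹ • p, smul_inv_smul g p⟩
  have hq : q ∈ candPairs := inv_smul_smul g q ▸ smul_mem_candPairs g⁻¹ hp
  rw [mark_smul_smul, mark_ofColoring_smul g c hq]

/-- The pairs `(u, g)` for which `u` permutes the points `pt v` as `g` permutes the indices `v`. -/
def vertexRealizations : Subgroup (GL (Fin 3) ℝ × DihedralGroup 8) where
  carrier := {x | ∀ v, x.1.val *ᵥ pt v = pt (x.2 • v)}
  one_mem' v := by simp
  mul_mem' {x y} hx hy v := by
    rw [Prod.fst_mul, Prod.snd_mul, Units.val_mul, ← mulVec_mulVec, hy, hx, mul_smul]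
  inv_mem' {x} hx v := by
    rw [← smul_inv_smul x.2 v, ← hx, mulVec_mulVec, Prod.fst_inv, ← Units.val_mul,
      inv_mul_cancel, Units.val_one, one_mulVec, Prod.snd_inv, inv_smul_smul]

lemma sigma2'_mulVec_pt (v : Fin 18) : sigma2' *ᵥ pt v = pt (rotateVertex v) := by
  have h : (√2)⁻¹ = √2 / 2 := by field_simp; norm_num
  have h2 : √2 * √2 = 2 := by norm_num
  fin_cases v <;> ext j <;> fin_cases j <;>
    simp [pt, sigma2', rotateVertex, mulVec, dotProduct, Fin.sum_univ_three, h] <;> grind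

lemma sigma'_mulVec_pt (v : Fin 18) : sigma' *ᵥ pt v = pt (reflectVertex v) := by
  fin_cases v <;> ext j <;> fin_cases j <;>
    simp [pt, sigma', reflectVertex, mulVec, dotProduct, Fin.sum_univ_three]

lemma det_sigma2' : sigma2'.det = -1 := by
  have h : (√2)⁻¹ * (√2)⁻¹ = 1 / 2 := by rw [← mul_inv, Real.mul_self_sqrt zero_le_two, one_div]
  rw [sigma2', det_fin_three]
  simp only [of_apply, cons_val, one_div]
  linear_combination -2 * h

lemma det_sigma' : sigma'.det = -1 := by
  simp [sigma', det_fin_three]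

lemma mem_vertexRealizations_of_eq_sigma2' {u : GL (Fin 3) ℝ} (hu : u.val = sigma2') :
    (u, r 1) ∈ vertexRealizations := fun v => hu ▸ sigma2'_mulVec_pt v

lemma mem_vertexRealizations_of_eq_sigma' {u : GL (Fin 3) ℝ} (hu : u.val = sigma') :
    (u, sr 0) ∈ vertexRealizations := fun v => hu ▸ sigma'_mulVec_pt v

lemma exists_mem_vertexRealizations_of_mem_G' {u : GL (Fin 3) ℝ} (hu : u ∈ G') :
    ∃ g, (u, g) ∈ vertexRealizations := by
  have le : G' ≤ vertexRealizations.map (MonoidHom.fst _ _) := by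
    refine (Subgroup.closure_le _).2 ?_
    rintro u (hu | hu)
    · exact ⟨_, mem_vertexRealizations_of_eq_sigma2' hu, rfl⟩
    · exact ⟨_, mem_vertexRealizations_of_eq_sigma' hu, rfl⟩
  obtain ⟨⟨u, g⟩, h, rfl⟩ := le hu
  exact ⟨g, h⟩

lemma exists_mem_G'_mem_vertexRealizations (g : DihedralGroup 8) :
    ∃ u ∈ G', (u, g) ∈ vertexRealizations := by
  have le : Subgroup.closure {r 1, sr 0} ≤
      (vertexRealizations ⊓ G'.prod ⊤).map (MonoidHom.snd _ _) := by
    refine (Subgroup.closure_le _).2 ?_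
    rintro g (rfl | rfl)
    · let u := GeneralLinearGroup.mkOfDetNeZero sigma2' (by simp [det_sigma2'])
      exact ⟨(u, r 1), ⟨mem_vertexRealizations_of_eq_sigma2' rfl,
        Subgroup.subset_closure (.inl rfl), trivial⟩, rfl⟩
    · let u := GeneralLinearGroup.mkOfDetNeZero sigma' (by simp [det_sigma'])
      exact ⟨(u, sr 0), ⟨mem_vertexRealizations_of_eq_sigma' rfl,
        Subgroup.subset_closure (.inr rfl), trivial⟩, rfl⟩
  obtain ⟨⟨u, g⟩, ⟨h, hu, -⟩, rfl⟩ := le (closure_r_one_sr_zero ▸ Subgroup.mem_top g)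
  exact ⟨u, hu, h⟩

/-- The signs of the coordinates of `pt v`, which determine `v`. -/
def signVector : Fin 18 → Fin 3 → SignType :=
  ![![1, 0, 1], ![0, 1, 1], ![-1, 0, 1], ![0, -1, 1],
    ![1, 1, -1], ![-1, 1, -1], ![-1, -1, -1], ![1, -1, -1],
    ![0, 0, 1], ![1, 0, 0], ![0, 1, 0], ![-1, 0, 0], ![0, -1, 0], ![0, 0, -1],
    ![1, -1, 0], ![1, 1, 0], ![-1, 1, 0], ![-1, -1, 0]]

lemma signVector_injective : signVector.Injective := by decide +kernel

lemma sign_pt (v : Fin 18) (j : Fin 3) : SignType.sign (pt v j) = signVector v j := by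
  have tau_pos : 0 < tau := by unfold tau; positivity
  fin_cases v <;> fin_cases j <;> simp [pt, signVector, tau_pos]

lemma pt_injective : pt.Injective := fun v w h =>
  signVector_injective <| funext fun j => by rw [← sign_pt, ← sign_pt, h]

lemma forall_mem_iff_smul_eq {u : GL (Fin 3) ℝ} {g : DihedralGroup 8}
    (h : (u, g) ∈ vertexRealizations) (C C' : Finset (Fin 18 × Fin 18)) :
    (∀ p : Fin 18 × Fin 18, p ∈ C' ↔ ∃ q ∈ C, u.val *ᵥ pt q.1 = pt p.1 ∧
      u.val *ᵥ pt q.2 = pt p.2) ↔ g • C = C' := by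
  have image (q p : Fin 18 × Fin 18) :
      (u.val *ᵥ pt q.1 = pt p.1 ∧ u.val *ᵥ pt q.2 = pt p.2) ↔ g • q = p := by
    rw [h, h, pt_injective.eq_iff, pt_injective.eq_iff, Prod.ext_iff, Prod.smul_fst, Prod.smul_snd]
  simp only [image, ← Finset.mem_smul_finset, Finset.ext_iff]
  exact forall_congr' fun _ => iff_comm

lemma admRel_iff {C C' : {C : Finset (Fin 18 × Fin 18) // IsAdmissible C}} :
    admRel C C' ↔ ∃ g : DihedralGroup 8, g • C.1 = C'.1 := by
  constructor
  · rintro ⟨u, hu, h⟩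
    obtain ⟨g, hg⟩ := exists_mem_vertexRealizations_of_mem_G' hu
    exact ⟨g, (forall_mem_iff_smul_eq hg _ _).1 h⟩
  · rintro ⟨g, h⟩
    obtain ⟨u, hu, hg⟩ := exists_mem_G'_mem_vertexRealizations g
    exact ⟨u, hu, (forall_mem_iff_smul_eq hg _ _).2 h⟩

attribute [local instance] arrowAction in
lemma admRel_coloringEquiv_iff (c d : ZMod 8 → ZMod 2) :
    MulAction.orbitRel (DihedralGroup 8) _ c d ↔
      admRel (coloringEquiv c) (coloringEquiv d) := by
  rw [admRel_iff, Setoid.comm', MulAction.orbitRel_apply]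
  refine exists_congr fun g => ?_
  change g • c = d ↔ g • ofColoring c = ofColoring d
  rw [smul_ofColoring, ofColoring_injective.eq_iff]

end VertexAction

/-- There are exactly `30` `G'`-orbits of admissible subsets of the 24 candidate
pairs; the full set of candidate pairs is admissible (its orbit corresponds to the
monohedral tiling `FB𝒪`), and the remaining `29` orbits correspond to the dihedral
f-tilings with prototiles the Möbius triangle and the kite derived from `FB𝒪`. -/
theorem stmt_13 : Nat.card (Quot admRel) = 30 ∧ IsAdmissible candPairs := by
  refine ⟨?_, ofColoring_one ▸ isAdmissible_ofColoring 1⟩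
  rw [← card_bracelets]
  exact Nat.card_congr (Quot.congr coloringEquiv admRel_coloringEquiv_iff).symm
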